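/- There exists a universal constant C > 0 such that the following holds. Let V be a finite set with |V| = n ≥ 2, A ⊆ V × V a set of arcs, s, t ∈ V distinct, and U a finite set of scenarios with |U| = K ≥ 3, each scenario ξ assigning a nonnegative cost c^ξ_e to every arc e ∈ A. Suppose x : A → [0,1] satisfies the s–t flow constraints (value-1 flow from s to t with conservation at intermediate nodes), the set of arcs with x_e > 0 contains no directed cycle, and for some L > 0, Σ_{e∈A} c^ξ_e x_e ≤ L for every ξ ∈ U and c^ξ_e ≤ L for every ξ ∈ U and every arc e with x_e > 0. Then for every real number l̂ ≥ 1 there exists a directed path P from s to t, all of whose arcs e satisfy x_e > 0, such that Σ_{e∈P} c^ξ_e ≤ C · ((n · ln K)/(l̂ · ln ln K) + l̂) · L for every ξ ∈ U. -/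

import Mathlib

/-- `IsDipath A s t p` : the list of vertices `p` is a directed path from `s`
to `t` whose consecutive pairs are arcs of `A`, with all vertices distinct. -/
def IsDipath {V : Type} (A : Finset (V × V)) (s t : V) (p : List V) : Prop :=
  p.Nodup ∧ p.head? = some s ∧ p.getLast? = some t ∧
    p.Chain' (fun u v => (u, v) ∈ A)


section helpers
open Finset

lemma avg_exists {V : Type} [Fintype V] (p f : V → ℝ) (Z : ℝ) (hp : ∀ w, 0 ≤ p w)
    (h1 : ∑ w, p w = 1) (h : ∑ w, p w * f w ≤ Z) : ∃ w, 0 < p w ∧ f w ≤ Z := by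
  by_contra hcon
  push Not at hcon
  have hle : ∀ w ∈ (univ : Finset V), p w * Z ≤ p w * f w := by
    intro w _
    rcases (hp w).eq_or_lt with h0 | h0
    · simp [← h0]
    · exact mul_le_mul_of_nonneg_left (hcon w h0).le h0.le
  have hex : ∃ w, 0 < p w := by
    by_contra hn
    push Not at hn
    have : ∑ w, p w ≤ 0 := Finset.sum_nonpos (fun w _ => hn w)
    linarith
  obtain ⟨w, hw⟩ := hex
  have hlt : ∑ w, p w * Z < ∑ w, p w * f w :=
    Finset.sum_lt_sum hle ⟨w, mem_univ _, mul_lt_mul_of_pos_left (hcon w hw) hw⟩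
  rw [← Finset.sum_mul, h1] at hlt
  linarith

lemma exp_chord (l y : ℝ) (h0 : 0 ≤ y) (h1 : y ≤ 1) :
    Real.exp (l * y) ≤ 1 + y * (Real.exp l - 1) := by
  have := convexOn_exp.2 (Set.mem_univ (0 : ℝ)) (Set.mem_univ l) (sub_nonneg.2 h1) h0 (by ring)
  simp only [smul_eq_mul, mul_zero, zero_add, Real.exp_zero] at this
  rw [mul_comm l y]
  linarith

lemma exists_expected {V : Type} [Fintype V] (R : V → V → Prop)
    (hwf : WellFounded (fun w v => R v w)) (p : V → V → ℝ) (hp : ∀ v w, p v w ≠ 0 → R v w)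
    (g : V → ℝ) (t : V) :
    ∃ N : V → ℝ, N t = 0 ∧ ∀ v, v ≠ t → N v = g v + ∑ w, p v w * N w := by
  classical
  let F : ∀ v, (∀ w, R v w → ℝ) → ℝ := fun v rec =>
    if v = t then 0 else g v + ∑ w, if h : R v w then p v w * rec w h else 0
  refine ⟨hwf.fix F, ?_, ?_⟩
  · rw [hwf.fix_eq]; simp [F]
  · intro v hv
    rw [hwf.fix_eq]
    simp only [F, if_neg hv]
    congr 1
    apply Finset.sum_congr rfl
    intro w _
    by_cases h : R v w
    · simp [h]
    · have : p v w = 0 := by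
        by_contra h0
        exact h (hp v w h0)
      simp [h, this]

/-- the sum of `f` over arcs of a path -/
def pathSum {V : Type} (f : V → V → ℝ) (p : List V) : ℝ :=
  ((p.zip p.tail).map (fun e => f e.1 e.2)).sum

lemma pathSum_cons {V : Type} (f : V → V → ℝ) (v w : V) (q : List V) :
    pathSum f (v :: w :: q) = f v w + pathSum f (w :: q) := by
  simp [pathSum]

/-- greedy walk along a potential -/
lemma greedy {V : Type} [Fintype V] {K : ℕ} (R : V → V → Prop)
    (hwf : WellFounded (fun w v => R v w)) (t : V) (Good : V → Prop)
    (p : V → V → ℝ) (hp0 : ∀ v w, 0 ≤ p v w)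
    (hpR : ∀ v w, 0 < p v w → R v w)
    (hstep : ∀ v w, R v w → w = t ∨ Good w)
    (hp1 : ∀ v, Good v → ∑ w, p v w = 1)
    (l κ : ℝ) (hc : Fin K → V → V → ℝ) (lc : V → ℝ)
    (G : Fin K → V → ℝ) (N : V → ℝ)
    (hGt : ∀ ξ, 1 ≤ G ξ t) (hNt : N t = 0)
    (hG : ∀ ξ v, v ≠ t → Good v → ∑ w, p v w * (Real.exp (l * hc ξ v w) * G ξ w) ≤ G ξ v)
    (hN : ∀ v, v ≠ t → N v = lc v + ∑ w, p v w * N w) :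
    ∀ v, (v = t ∨ Good v) → ∀ W : Fin K → ℝ, (∀ ξ, 0 ≤ W ξ) →
      ∃ q : List V, List.IsChain R (v :: q) ∧ (v :: q).getLast? = some t ∧
        ∑ ξ, W ξ * Real.exp (l * pathSum (hc ξ) (v :: q)) + κ * pathSum (fun v _ => lc v) (v :: q)
          ≤ ∑ ξ, W ξ * G ξ v + κ * N v := by
  intro v
  induction v using hwf.induction with
  | _ v ih =>
  intro hv W hW
  by_cases hvt : v = t
  · subst hvt
    refine ⟨[], by simp, by simp, ?_⟩
    simp only [pathSum, List.tail_cons, List.zip_nil_right, List.map_nil, List.sum_nil, mul_zero,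
      Real.exp_zero, hNt]
    gcongr with ξ
    · exact hW ξ
    · exact hGt ξ
  have hg : Good v := hv.resolve_left hvt
  obtain ⟨w, hw, hle⟩ := avg_exists (p v)
    (fun w => ∑ ξ, (W ξ * Real.exp (l * hc ξ v w)) * G ξ w + κ * (lc v + N w))
    (∑ ξ, W ξ * G ξ v + κ * N v) (hp0 v) (hp1 v hg) (by
      have e1 : ∑ w, p v w * (∑ ξ, (W ξ * Real.exp (l * hc ξ v w)) * G ξ w + κ * (lc v + N w))
          = ∑ ξ, W ξ * (∑ w, p v w * (Real.exp (l * hc ξ v w) * G ξ w))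
            + κ * ((∑ w, p v w) * lc v + ∑ w, p v w * N w) := by
        simp only [mul_add, Finset.sum_add_distrib, Finset.mul_sum, Finset.sum_mul]
        congr 1
        · rw [Finset.sum_comm]
          refine Finset.sum_congr rfl fun ξ _ => Finset.sum_congr rfl fun w _ => by ring
        · congr 1 <;> refine Finset.sum_congr rfl fun w _ => by ring
      rw [e1, hp1 v hg, one_mul, ← hN v hvt]
      gcongr with ξ
      · exact hW ξ
      · exact hG ξ v hvt hg)
  have hR := hpR v w hw
  obtain ⟨q, hq1, hq2, hq3⟩ := ih w hR (hstep v w hR) (fun ξ => W ξ * Real.exp (l * hc ξ v w))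
    (fun ξ => mul_nonneg (hW ξ) (Real.exp_pos _).le)
  refine ⟨w :: q, ?_, ?_, ?_⟩
  · exact List.isChain_cons_cons.2 ⟨hR, hq1⟩
  · simpa using hq2
  · simp only [pathSum_cons, mul_add, Real.exp_add]
    simp only [mul_add] at hle
    simp only [← mul_assoc]
    linarith

/-- the core statement in terms of a weight matrix `y`. -/
lemma core {V : Type} [Fintype V] [DecidableEq V] {K : ℕ} (hK : 0 < K) (y : V → V → ℝ) (s t : V)
    (hst : s ≠ t) (hy : ∀ v w, 0 ≤ y v w)
    (hs : ∑ w, y s w = 1) (ht : ∑ w, y w t = 1)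
    (hcons : ∀ v, v ≠ s → v ≠ t → ∑ w, y v w = ∑ w, y w v)
    (hirr : ∀ v, ¬ Relation.TransGen (fun v w => 0 < y v w) v v)
    (d : Fin K → V → V → ℝ) (hd0 : ∀ ξ v w, 0 < y v w → 0 ≤ d ξ v w)
    (hd1 : ∀ ξ v w, 0 < y v w → d ξ v w ≤ 1)
    (hdy : ∀ ξ, ∑ v, ∑ w, d ξ v w * y v w ≤ 1)
    (l : ℝ) (hl : 0 < l) (lhat : ℝ) (hlh : 0 < lhat) :
    ∃ q : List V, List.IsChain (fun v w => 0 < y v w) (s :: q) ∧ (s :: q).getLast? = some t ∧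
      ∀ ξ, pathSum (d ξ) (s :: q) ≤
        (Real.log 2 + Real.log K + (Real.exp l - 1) * (Fintype.card V / lhat)) / l + 2 * lhat := by
  classical
  set R : V → V → Prop := fun v w => 0 < y v w with hR
  set out : V → ℝ := fun v => ∑ w, y v w with hout
  have hout0 : ∀ v, 0 ≤ out v := fun v => Finset.sum_nonneg fun w _ => hy v w
  have houtR : ∀ v w, R v w → 0 < out v := fun v w h =>
    lt_of_lt_of_le h (Finset.single_le_sum (f := fun w => y v w) (fun w _ => hy v w) (mem_univ w))
  have hwf : WellFounded (fun w v => R v w) := by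
    have : IsTrans V (fun w v => Relation.TransGen R v w) := ⟨fun a b c h1 h2 => h2.trans h1⟩
    have : Std.Irrefl (fun w v => Relation.TransGen R v w) := ⟨fun a => hirr a⟩
    have h := Finite.wellFounded_of_trans_of_irrefl (fun w v => Relation.TransGen R v w)
    exact Subrelation.wf (fun {a b} h => Relation.TransGen.single h) h
  have hstep : ∀ v w, R v w → w = t ∨ 0 < out w := by
    intro v w h
    by_cases hwt : w = t
    · exact Or.inl hwt
    right
    by_cases hws : w = s
    · subst hws; simp only [hout, hs]; norm_num
    · simp only [hout]
      rw [hcons w hws hwt]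
      exact lt_of_lt_of_le h
        (Finset.single_le_sum (f := fun v => y v w) (fun w' _ => hy w' w) (mem_univ v))
  have hreach : ∀ v, (v = t ∨ 0 < out v) → Relation.ReflTransGen R v t := by
    intro v
    induction v using hwf.induction with
    | _ v ih =>
    intro hv
    by_cases hvt : v = t
    · subst hvt; exact .refl
    have h := hv.resolve_left hvt
    obtain ⟨w, -, hw⟩ := Finset.exists_ne_zero_of_sum_ne_zero h.ne'
    have hw' : R v w := lt_of_le_of_ne (hy v w) (Ne.symm hw)
    exact .head hw' (ih w hw' (hstep v w hw'))
  have houtt : out t = 0 := by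
    by_contra h
    obtain ⟨w, -, hw⟩ := Finset.exists_ne_zero_of_sum_ne_zero h
    have hw' : R t w := lt_of_le_of_ne (hy t w) (Ne.symm hw)
    exact hirr t (Relation.TransGen.head' hw' (hreach w (hstep t w hw')))
  have hsplit : ∀ f : V → ℝ, ∑ v, f v = f s + f t + ∑ v ∈ (univ.erase s).erase t, f v := by
    intro f
    rw [← Finset.add_sum_erase univ f (mem_univ s),
      ← Finset.add_sum_erase (univ.erase s) f (by simp [hst.symm] : t ∈ univ.erase s)]
    ring
  have hins : ∑ w, y w s = 0 := by
    have h1 : ∑ v, ∑ w, y v w = ∑ v, ∑ w, y w v := Finset.sum_comm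
    rw [hsplit, hsplit (fun v => ∑ w, y w v)] at h1
    have h2 : ∑ v ∈ (univ.erase s).erase t, ∑ w, y v w
        = ∑ v ∈ (univ.erase s).erase t, ∑ w, y w v := by
      refine Finset.sum_congr rfl fun v hv => ?_
      simp only [mem_erase, mem_univ, and_true] at hv
      exact hcons v hv.2 hv.1
    have h3 : ∑ w, y t w = 0 := houtt
    rw [h2, hs, ht, h3] at h1
    linarith
  set p : V → V → ℝ := fun v w => y v w / out v with hp
  have hp0 : ∀ v w, 0 ≤ p v w := fun v w => div_nonneg (hy v w) (hout0 v)
  have hpR : ∀ v w, p v w ≠ 0 → R v w := by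
    intro v w h
    refine lt_of_le_of_ne (hy v w) fun h0 => h ?_
    simp [hp, ← h0]
  have hp1 : ∀ v, 0 < out v → ∑ w, p v w = 1 := by
    intro v hv
    simp only [hp]
    rw [← Finset.sum_div]
    exact div_self hv.ne'
  have hoy : ∀ v w, out v * p v w = y v w := by
    intro v w
    rcases (hout0 v).eq_or_lt with h | h
    · have : y v w = 0 := by
        by_contra h0
        exact (houtR v w (lt_of_le_of_ne (hy v w) (Ne.symm h0))).ne h
      simp [this, ← h]
    · simp only [hp]; field_simp
  have hn : (0 : ℝ) < Fintype.card V := by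
    exact_mod_cast Fintype.card_pos_iff.2 ⟨s⟩
  set θ : ℝ := lhat / Fintype.card V with hθ
  have hθ0 : 0 < θ := div_pos hlh hn
  set lc : V → ℝ := fun v => if θ ≤ out v then 0 else 1 with hlc
  set hc : Fin K → V → V → ℝ := fun ξ v w => if θ ≤ out v then d ξ v w else 0 with hhc
  obtain ⟨N, hNt, hN⟩ := exists_expected R hwf p hpR lc t
  have hNs : N s ≤ lhat := by
    have h1 : ∑ v, out v * N v = ∑ v, out v * lc v + ∑ v, ∑ w, y v w * N w := by
      rw [← Finset.sum_add_distrib]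
      refine Finset.sum_congr rfl fun v _ => ?_
      by_cases hvt : v = t
      · subst hvt
        have : ∀ w, y v w = 0 := fun w => by rw [← hoy, houtt, zero_mul]
        simp [houtt, this]
      · conv_lhs => rw [hN v hvt]
        rw [mul_add, Finset.mul_sum]
        congr 1
        refine Finset.sum_congr rfl fun w _ => ?_
        rw [← mul_assoc, hoy]
    rw [Finset.sum_comm (f := fun v w => y v w * N w)] at h1
    simp only [← Finset.sum_mul] at h1
    rw [hsplit, hsplit (fun w => (∑ v, y v w) * N w)] at h1
    have h2 : ∑ v ∈ (univ.erase s).erase t, out v * N v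
        = ∑ v ∈ (univ.erase s).erase t, (∑ w, y w v) * N v := by
      refine Finset.sum_congr rfl fun v hv => ?_
      simp only [mem_erase, mem_univ, and_true] at hv
      rw [← hcons v hv.2 hv.1]
    have h4 : out s = 1 := hs
    rw [h2, hNt, hins, h4] at h1
    have h3 : ∑ v, out v * lc v ≤ ∑ v : V, θ := by
      refine Finset.sum_le_sum fun v _ => ?_
      simp only [hlc]
      split_ifs with h
      · simpa using hθ0.le
      · push Not at h; simpa using h.le
    have h5 : ∑ v : V, θ = lhat := by
      simp [hθ]; field_simp
    linarith
  have hel : 0 < Real.exp l - 1 := by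
    have := Real.add_one_lt_exp hl.ne'
    linarith
  set B : Fin K → V → ℝ := fun ξ u => (Real.exp l - 1) * ∑ w, p u w * d ξ u w with hB
  have hB0 : ∀ ξ u, 0 ≤ B ξ u := by
    intro ξ u
    refine mul_nonneg hel.le (Finset.sum_nonneg fun w _ => ?_)
    by_cases h : p u w = 0
    · simp [h]
    · exact mul_nonneg (hp0 u w) (hd0 ξ u w (hpR u w h))
  set T : V → Finset V := fun v => univ.filter (fun u => θ ≤ out u ∧ Relation.ReflTransGen R v u)
    with hT
  set G : Fin K → V → ℝ := fun ξ v => Real.exp (∑ u ∈ T v, B ξ u) with hG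
  have hTw : ∀ v w, R v w → T w ⊆ (T v).erase v := by
    intro v w h u hu
    simp only [hT, mem_filter, mem_univ, true_and, mem_erase] at hu ⊢
    refine ⟨?_, hu.1, .head h hu.2⟩
    rintro rfl
    exact hirr u (Relation.TransGen.head' h hu.2)
  have hGstep : ∀ ξ v, v ≠ t → 0 < out v →
      ∑ w, p v w * (Real.exp (l * hc ξ v w) * G ξ w) ≤ G ξ v := by
    intro ξ v _ hv
    have hGw : ∀ w, R v w → G ξ w ≤ Real.exp (∑ u ∈ (T v).erase v, B ξ u) := fun w h =>
      Real.exp_le_exp.2 (Finset.sum_le_sum_of_subset_of_nonneg (hTw v w h) fun u _ _ => hB0 ξ u)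
    set E := Real.exp (∑ u ∈ (T v).erase v, B ξ u) with hE
    have hE0 : 0 < E := Real.exp_pos _
    by_cases hh : θ ≤ out v
    · have hvT : v ∈ T v := by simp [hT, hh, Relation.ReflTransGen.refl]
      have hGv : G ξ v = Real.exp (B ξ v) * E := by
        simp only [hG, hE]
        rw [← Real.exp_add, Finset.add_sum_erase _ _ hvT]
      rw [hGv]
      calc ∑ w, p v w * (Real.exp (l * hc ξ v w) * G ξ w)
          ≤ ∑ w, (p v w * (1 + d ξ v w * (Real.exp l - 1))) * E := by
            refine Finset.sum_le_sum fun w _ => ?_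
            by_cases h : p v w = 0
            · simp [h]
            · have hRw := hpR v w h
              rw [mul_assoc]
              refine mul_le_mul_of_nonneg_left ?_ (hp0 v w)
              simp only [hhc, if_pos hh]
              refine mul_le_mul (exp_chord l _ (hd0 ξ v w hRw) (hd1 ξ v w hRw)) (hGw w hRw)
                (Real.exp_pos _).le ?_
              exact (Real.exp_pos _).le.trans (exp_chord l _ (hd0 ξ v w hRw) (hd1 ξ v w hRw))
        _ = (1 + B ξ v) * E := by
            rw [← Finset.sum_mul]
            congr 1
            simp only [mul_add, mul_one, Finset.sum_add_distrib, hp1 v hv, hB, Finset.mul_sum]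
            congr 1
            refine Finset.sum_congr rfl fun w _ => by ring
        _ ≤ Real.exp (B ξ v) * E := by
            gcongr
            linarith [Real.add_one_le_exp (B ξ v)]
    · have hEG : E ≤ G ξ v :=
        Real.exp_le_exp.2 (Finset.sum_le_sum_of_subset_of_nonneg (Finset.erase_subset _ _)
          fun u _ _ => hB0 ξ u)
      refine le_trans ?_ hEG
      calc ∑ w, p v w * (Real.exp (l * hc ξ v w) * G ξ w) ≤ ∑ w, p v w * E := by
            refine Finset.sum_le_sum fun w _ => ?_
            by_cases h : p v w = 0
            · simp [h]
            · simp only [hhc, if_neg hh, mul_zero, Real.exp_zero, one_mul]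
              exact mul_le_mul_of_nonneg_left (hGw w (hpR v w h)) (hp0 v w)
        _ = E := by rw [← Finset.sum_mul, hp1 v hv, one_mul]
  have hGt : ∀ ξ v, 1 ≤ G ξ v := fun ξ v =>
    Real.one_le_exp (Finset.sum_nonneg fun u _ => hB0 ξ u)
  have hGs : ∀ ξ, G ξ s ≤ Real.exp ((Real.exp l - 1) * (Fintype.card V / lhat)) := by
    intro ξ
    refine Real.exp_le_exp.2 ?_
    simp only [hB]
    rw [← Finset.mul_sum]
    refine mul_le_mul_of_nonneg_left ?_ hel.le
    have hdn : ∀ u w, 0 ≤ d ξ u w * y u w := by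
      intro u w
      by_cases h : 0 < y u w
      · exact mul_nonneg (hd0 ξ u w h) h.le
      · have : y u w = 0 := le_antisymm (not_lt.1 h) (hy u w)
        simp [this]
    calc ∑ u ∈ T s, ∑ w, p u w * d ξ u w ≤ ∑ u ∈ T s, (∑ w, d ξ u w * y u w) * θ⁻¹ := by
          refine Finset.sum_le_sum fun u hu => ?_
          simp only [hT, mem_filter, mem_univ, true_and] at hu
          rw [Finset.sum_mul]
          refine Finset.sum_le_sum fun w _ => ?_
          have : p u w * d ξ u w = (d ξ u w * y u w) * (out u)⁻¹ := by
            simp only [hp]; ring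
          rw [this]
          refine mul_le_mul_of_nonneg_left ?_ (hdn u w)
          exact inv_anti₀ hθ0 hu.1
      _ ≤ ∑ u, (∑ w, d ξ u w * y u w) * θ⁻¹ :=
          Finset.sum_le_sum_of_subset_of_nonneg (Finset.subset_univ _) fun u _ _ =>
            mul_nonneg (Finset.sum_nonneg fun w _ => hdn u w) (inv_nonneg.2 hθ0.le)
      _ ≤ 1 * θ⁻¹ := by
          rw [← Finset.sum_mul]
          exact mul_le_mul_of_nonneg_right (hdy ξ) (inv_nonneg.2 hθ0.le)
      _ = Fintype.card V / lhat := by rw [one_mul, hθ, inv_div]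
  have hKr : (0 : ℝ) < K := by exact_mod_cast hK
  set D : ℝ := K * Real.exp ((Real.exp l - 1) * (Fintype.card V / lhat)) with hD
  have hD0 : 0 < D := mul_pos hKr (Real.exp_pos _)
  obtain ⟨q, hq1, hq2, hq3⟩ := greedy R hwf t (fun v => 0 < out v) p hp0
    (fun v w h => hpR v w h.ne') hstep hp1 l (D / lhat) hc lc G N (fun ξ => hGt ξ t) hNt hGstep hN s
    (Or.inr (by simp only [hout, hs]; norm_num)) (fun _ => 1) (fun _ => zero_le_one)
  refine ⟨q, hq1, hq2, fun ξ => ?_⟩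
  simp only [one_mul] at hq3
  have hr : ∑ ξ, G ξ s + D / lhat * N s ≤ 2 * D := by
    have h1 : ∑ ξ, G ξ s ≤ D := by
      refine (Finset.sum_le_sum fun ξ _ => hGs ξ).trans ?_
      simp [hD]
    have h2 : D / lhat * N s ≤ D / lhat * lhat :=
      mul_le_mul_of_nonneg_left hNs (div_pos hD0 hlh).le
    rw [div_mul_cancel₀ _ hlh.ne'] at h2
    linarith
  have hlow0 : 0 ≤ pathSum (fun v _ => lc v) (s :: q) := by
    refine List.sum_nonneg fun a ha => ?_
    obtain ⟨e, -, rfl⟩ := List.mem_map.1 ha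
    simp only [hlc]; split_ifs <;> norm_num
  have hsum := hq3.trans hr
  have hlow : pathSum (fun v _ => lc v) (s :: q) ≤ 2 * lhat := by
    have h1 : 0 ≤ ∑ ξ, Real.exp (l * pathSum (hc ξ) (s :: q)) :=
      Finset.sum_nonneg fun ξ _ => (Real.exp_pos _).le
    have h2 : D / lhat * pathSum (fun v _ => lc v) (s :: q) ≤ D / lhat * (2 * lhat) := by
      have : D / lhat * (2 * lhat) = 2 * D := by field_simp
      linarith
    exact le_of_mul_le_mul_left h2 (div_pos hD0 hlh)
  have hhigh : pathSum (hc ξ) (s :: q) ≤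
      (Real.log 2 + Real.log K + (Real.exp l - 1) * (Fintype.card V / lhat)) / l := by
    have h1 : Real.exp (l * pathSum (hc ξ) (s :: q)) ≤ 2 * D := by
      have h2 := Finset.single_le_sum (f := fun ξ => Real.exp (l * pathSum (hc ξ) (s :: q)))
        (fun ξ _ => (Real.exp_pos _).le) (mem_univ ξ)
      have h3 := mul_nonneg (div_pos hD0 hlh).le hlow0
      linarith
    rw [le_div_iff₀ hl]
    have h2 := (Real.le_log_iff_exp_le (by positivity)).2 h1
    rw [Real.log_mul two_ne_zero hD0.ne', hD, Real.log_mul hKr.ne' (Real.exp_pos _).ne',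
      Real.log_exp] at h2
    linarith
  have hcomb : ∀ r : List V, List.IsChain R r →
      pathSum (d ξ) r ≤ pathSum (hc ξ) r + pathSum (fun v _ => lc v) r := by
    intro r
    induction r with
    | nil => simp [pathSum]
    | cons a r ih =>
      cases r with
      | nil => simp [pathSum]
      | cons b r =>
        intro h
        obtain ⟨h1, h2⟩ := List.isChain_cons_cons.1 h
        have := ih h2
        simp only [pathSum_cons]
        have h3 : d ξ a b ≤ hc ξ a b + lc a := by
          simp only [hhc, hlc]
          split_ifs
          · simp
          · simpa using hd1 ξ a b h1
        linarith
  have := hcomb _ hq1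
  linarith

/-- from a chain with closing arc we get a cyclic list. -/
lemma cycle_zip {V : Type} (P : V × V → Prop) (R : V → V → Prop) (hRP : ∀ a b, R a b → P (a, b))
    (z : V) : ∀ (q : List V) (v : V), List.IsChain R (v :: q ++ [z]) →
      ∀ e ∈ (v :: q).zip (q ++ [z]), P e := by
  intro q
  induction q with
  | nil =>
    intro v h e he
    simp at h he
    subst he; exact hRP _ _ h
  | cons w q ih =>
    intro v h e he
    simp only [List.cons_append] at h
    obtain ⟨h1, h2⟩ := List.isChain_cons_cons.1 h
    simp only [List.cons_append, List.zip_cons_cons, List.mem_cons] at he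
    rcases he with rfl | he
    · exact hRP _ _ h1
    · exact ih w h2 e (by simpa using he)

lemma irrefl_of_no_cycle {V : Type} (P : V × V → Prop) (R : V → V → Prop)
    (hRP : ∀ a b, R a b → P (a, b))
    (h : ∀ p : List V, p ≠ [] → ¬ (∀ e ∈ p.zip (p.rotate 1), P e)) (v : V) :
    ¬ Relation.TransGen R v v := by
  have key : ∀ a b, Relation.TransGen R a b → ∃ q, List.IsChain R (a :: q ++ [b]) := by
    intro a b hab
    induction hab using Relation.TransGen.head_induction_on with
    | single h => exact ⟨[], by simpa using h⟩
    | head h _ ih =>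
      obtain ⟨q, hq⟩ := ih
      exact ⟨_ :: q, List.isChain_cons_cons.2 ⟨h, hq⟩⟩
  intro hv
  obtain ⟨q, hq⟩ := key v v hv
  refine h (v :: q) (by simp) ?_
  have := cycle_zip P R hRP v q v hq
  simpa using this

lemma nodup_of_chain {V : Type} (R : V → V → Prop) (hirr : ∀ v, ¬ Relation.TransGen R v v)
    (p : List V) (h : List.IsChain R p) : p.Nodup := by
  have h1 : List.IsChain (Relation.TransGen R) p := h.imp fun a b => Relation.TransGen.single
  have h2 := List.isChain_iff_pairwise.1 h1
  refine h2.imp ?_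
  rintro a b hab rfl
  exact hirr a hab

lemma chain_zip {V : Type} (R : V → V → Prop) : ∀ p : List V, List.IsChain R p →
    ∀ e ∈ p.zip p.tail, R e.1 e.2
  | [], _, e, he => by simp at he
  | [a], _, e, he => by simp at he
  | a :: b :: r, h, e, he => by
    obtain ⟨h1, h2⟩ := List.isChain_cons_cons.1 h
    simp only [List.tail_cons, List.zip_cons_cons, List.mem_cons] at he
    rcases he with rfl | he
    · exact h1
    · exact chain_zip R (b :: r) h2 e he

end helpers

theorem stmt4 :
    ∃ C : ℝ, 0 < C ∧
      ∀ (V : Type) [Fintype V] [DecidableEq V]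
        (A : Finset (V × V)) (s t : V) (K : ℕ)
        (c : Fin K → V × V → ℝ) (x : V × V → ℝ) (L : ℝ),
        2 ≤ Fintype.card V → s ≠ t → 3 ≤ K →
        (∀ ξ, ∀ e ∈ A, 0 ≤ c ξ e) →
        (∀ e, 0 ≤ x e ∧ x e ≤ 1) →
        (∑ e ∈ A.filter (fun e => e.1 = s), x e) = 1 →
        (∑ e ∈ A.filter (fun e => e.2 = t), x e) = 1 →
        (∀ v, v ≠ s → v ≠ t →
          (∑ e ∈ A.filter (fun e => e.1 = v), x e) =
            ∑ e ∈ A.filter (fun e => e.2 = v), x e) →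
        (∀ p : List V, p ≠ [] →
          ¬ (∀ e ∈ p.zip (p.rotate 1), e ∈ A ∧ 0 < x e)) →
        0 < L →
        (∀ ξ, ∑ e ∈ A, c ξ e * x e ≤ L) →
        (∀ ξ, ∀ e ∈ A, 0 < x e → c ξ e ≤ L) →
        ∀ lhat : ℝ, 1 ≤ lhat →
          ∃ p : List V, IsDipath A s t p ∧
            (∀ e ∈ p.zip p.tail, 0 < x e) ∧
            ∀ ξ, ((p.zip p.tail).map (fun e => c ξ e)).sum ≤
              C * (((Fintype.card V : ℝ) * Real.log K) /
                (lhat * Real.log (Real.log K)) + lhat) * L := by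
  classical
  refine ⟨3, by norm_num, ?_⟩
  intro V _ _ A s t K c x L hcard hst hK hc0 hx hs ht hcons hcyc hL hcost hcL lhat hlh
  set y : V → V → ℝ := fun v w => if (v, w) ∈ A then x (v, w) else 0 with hy
  have hpos : ∀ v w, 0 < y v w → (v, w) ∈ A ∧ 0 < x (v, w) := by
    intro v w h
    by_cases hA : (v, w) ∈ A
    · simp only [hy, if_pos hA] at h; exact ⟨hA, h⟩
    · simp [hy, hA] at h
  have hfull : ∀ f : V × V → ℝ,
      ∑ e ∈ A, f e = ∑ v, ∑ w, if (v, w) ∈ A then f (v, w) else 0 := by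
    intro f
    rw [← Fintype.sum_prod_type' (f := fun v w => if (v, w) ∈ A then f (v, w) else 0)]
    simp
  have hOut : ∀ v, ∑ e ∈ A.filter (fun e => e.1 = v), x e = ∑ w, y v w := by
    intro v
    rw [Finset.sum_filter, hfull]
    rw [Finset.sum_eq_single v]
    · simp [hy]
    · intro b _ hb; simp [hb]
    · simp
  have hIn : ∀ v, ∑ e ∈ A.filter (fun e => e.2 = v), x e = ∑ w, y w v := by
    intro v
    rw [Finset.sum_filter, hfull]
    refine Finset.sum_congr rfl fun u _ => ?_
    rw [Finset.sum_eq_single v]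
    · simp [hy]
    · intro b _ hb; simp [hb]
    · simp
  have hirr : ∀ v, ¬ Relation.TransGen (fun v w => 0 < y v w) v v :=
    irrefl_of_no_cycle (fun e => e ∈ A ∧ 0 < x e) _ (fun a b h => hpos a b h) hcyc
  have hK3 : (3 : ℝ) ≤ K := by exact_mod_cast hK
  have hlogK : 1 < Real.log K := by
    rw [Real.lt_log_iff_exp_lt (by linarith)]
    exact Real.exp_one_lt_three.trans_le hK3
  have hll : 0 < Real.log (Real.log K) := Real.log_pos hlogK
  obtain ⟨q, hq1, hq2, hq3⟩ := core (K := K) (by omega) y s t hst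
    (fun v w => by simp only [hy]; split_ifs; exacts [(hx _).1, le_rfl])
    (by rw [← hOut, hs]) (by rw [← hIn, ht])
    (fun v h1 h2 => by rw [← hOut, ← hIn]; exact hcons v h1 h2) hirr
    (fun ξ v w => c ξ (v, w) / L)
    (fun ξ v w h => div_nonneg (hc0 ξ _ (hpos v w h).1) hL.le)
    (fun ξ v w h => (div_le_one hL).2 (hcL ξ _ (hpos v w h).1 (hpos v w h).2))
    (fun ξ => by
      have h := hcost ξ
      rw [hfull] at h
      have e : ∑ v, ∑ w, c ξ (v, w) / L * y v w
          = (∑ v, ∑ w, if (v, w) ∈ A then c ξ (v, w) * x (v, w) else 0) / L := by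
        simp only [Finset.sum_div]
        refine Finset.sum_congr rfl fun v _ => Finset.sum_congr rfl fun w _ => ?_
        simp only [hy]
        split_ifs
        · ring
        · simp
      rw [e]
      exact (div_le_one hL).2 h)
    (Real.log (Real.log K)) hll lhat (by linarith)
  have hz := chain_zip _ _ hq1
  have hnd := nodup_of_chain _ hirr _ hq1
  refine ⟨s :: q, ⟨hnd, by simp, hq2, ?_⟩, fun e he => (hpos _ _ (hz e he)).2, ?_⟩
  · exact hq1.imp fun a b h => (hpos a b h).1
  intro ξ
  have hn : (0 : ℝ) < Fintype.card V := by
    have : 0 < Fintype.card V := by omega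
    exact_mod_cast this
  by_cases hcase : lhat ≤ Fintype.card V
  · have h := hq3 ξ
    have e : pathSum (fun v w => c ξ (v, w) / L) (s :: q)
        = (((s :: q).zip (s :: q).tail).map (fun e => c ξ e)).sum / L := by
      simp only [pathSum, div_eq_mul_inv, List.sum_map_mul_right]
    rw [e, div_le_iff₀ hL] at h
    refine h.trans (mul_le_mul_of_nonneg_right ?_ hL.le)
    rw [Real.exp_log (by linarith)]
    set q' : ℝ := Fintype.card V / lhat with hq'
    have hq1' : 1 ≤ q' := (one_le_div (by linarith)).2 hcase
    have e2 : (Fintype.card V * Real.log K) / (lhat * Real.log (Real.log K))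
        = q' * Real.log K / Real.log (Real.log K) := by
      rw [hq']; field_simp
    rw [e2]
    have h2 : Real.log 2 ≤ Real.log K := Real.log_le_log (by norm_num) (by linarith)
    have h3 : (Real.log 2 + Real.log K + (Real.log K - 1) * q') / Real.log (Real.log K)
        ≤ (3 * (q' * Real.log K)) / Real.log (Real.log K) := by
      refine div_le_div_of_nonneg_right ?_ hll.le
      nlinarith
    rw [mul_div_assoc] at h3
    linarith
  · push Not at hcase
    have h1 : (((s :: q).zip (s :: q).tail).map (fun e => c ξ e)).sum
        ≤ (((s :: q).zip (s :: q).tail).map (fun e => c ξ e)).length • L := by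
      refine List.sum_le_card_nsmul _ _ fun a ha => ?_
      obtain ⟨e, he, rfl⟩ := List.mem_map.1 ha
      exact hcL ξ e (hpos _ _ (hz e he)).1 (hpos _ _ (hz e he)).2
    refine h1.trans ?_
    rw [nsmul_eq_mul]
    refine mul_le_mul_of_nonneg_right ?_ hL.le
    have h2 : ((((s :: q).zip (s :: q).tail).map (fun e => c ξ e)).length : ℝ)
        ≤ Fintype.card V := by
      have := hnd.length_le_card
      simp only [List.length_cons] at this
      have h4 : (((s :: q).zip (s :: q).tail).map (fun e => c ξ e)).length ≤ Fintype.card V := by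
        simp
        omega
      exact_mod_cast h4
    have h3 : 0 ≤ (Fintype.card V * Real.log K) / (lhat * Real.log (Real.log K)) := by
      apply div_nonneg
      · exact mul_nonneg hn.le (by linarith)
      · exact mul_nonneg (by linarith) hll.le
    linarith
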